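/- arXiv:1608.08907 — 12 statements merged into one kernel-verified Lean document; each statement's English description precedes it below -/
import Mathlib

section
/- Fix real numbers SNR1, SNR2 > 0, bSNR1, bSNR2 > 0, and INR12, INR21 > 1. For every ρ ∈ [0, (1 − max(1/INR12, 1/INR21))⁺] and every μ1, μ2 ∈ [0,1], let M = min(a_{2,1}(ρ)+a_{1,2}, a_{1,1}+a_{2,2}(ρ), a_{3,1}(ρ,μ2)+a_{1,1}+a_{3,2}(ρ,μ1)+a_{7,2}(ρ,μ1,μ2), a_{3,1}(ρ,μ2)+a_{5,1}(ρ,μ2)+a_{3,2}(ρ,μ1)+a_{5,2}(ρ,μ1), a_{3,1}(ρ,μ2)+a_{7,1}(ρ,μ1,μ2)+a_{3,2}(ρ,μ1)+a_{1,2}). Then each of the following five quantities is greater than or equal to M: a_{2,1}(ρ)+a_{6,2}(ρ,μ2); a_{6,1}(ρ,μ1)+a_{2,2}(ρ); a_{3,1}(ρ,μ2)+a_{4,1}(ρ,μ2)+a_{1,1}+a_{3,2}(ρ,μ1)+a_{5,2}(ρ,μ1); a_{3,1}(ρ,μ2)+a_{7,1}(ρ,μ1,μ2)+a_{3,2}(ρ,μ1)+a_{5,2}(ρ,μ1);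 and a_{3,1}(ρ,μ2)+a_{5,1}(ρ,μ2)+a_{3,2}(ρ,μ1)+a_{4,2}(ρ,μ1)+a_{1,2}. Consequently, the minimum over all ten quantities equals M. -/
/- Functions `b_{1,i}`, `b_{2,i}` of the paper (all logs base 2). -/
noncomputable def b11 (SNR1 INR12 ρ : ℝ) : ℝ := SNR1 + 2 * ρ * Real.sqrt (SNR1 * INR12) + INR12
noncomputable def b12 (SNR2 INR21 ρ : ℝ) : ℝ := SNR2 + 2 * ρ * Real.sqrt (SNR2 * INR21) + INR21
noncomputable def b21 (INR12 ρ : ℝ) : ℝ := (1 - ρ) * INR12 - 1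
noncomputable def b22 (INR21 ρ : ℝ) : ℝ := (1 - ρ) * INR21 - 1

/- Achievable-region bounds `a_{l,i}`. -/
noncomputable def a11 (SNR1 INR21 : ℝ) : ℝ := (1/2) * Real.logb 2 (2 + SNR1 / INR21) - 1/2
noncomputable def a12 (SNR2 INR12 : ℝ) : ℝ := (1/2) * Real.logb 2 (2 + SNR2 / INR12) - 1/2
noncomputable def a21 (SNR1 INR12 ρ : ℝ) : ℝ := (1/2) * Real.logb 2 (b11 SNR1 INR12 ρ + 1) - 1/2
noncomputable def a22 (SNR2 INR21 ρ : ℝ) : ℝ := (1/2) * Real.logb 2 (b12 SNR2 INR21 ρ + 1) - 1/2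
noncomputable def a31 (SNR1 bSNR1 INR12 ρ μ : ℝ) : ℝ :=
  (1/2) * Real.logb 2 ((bSNR1 * (b21 INR12 ρ + 2) + b11 SNR1 INR12 1 + 1) /
    (bSNR1 * ((1 - μ) * b21 INR12 ρ + 2) + b11 SNR1 INR12 1 + 1))
noncomputable def a32 (SNR2 bSNR2 INR21 ρ μ : ℝ) : ℝ :=
  (1/2) * Real.logb 2 ((bSNR2 * (b22 INR21 ρ + 2) + b12 SNR2 INR21 1 + 1) /
    (bSNR2 * ((1 - μ) * b22 INR21 ρ + 2) + b12 SNR2 INR21 1 + 1))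
noncomputable def a41 (INR12 ρ μ : ℝ) : ℝ := (1/2) * Real.logb 2 ((1 - μ) * b21 INR12 ρ + 2) - 1/2
noncomputable def a42 (INR21 ρ μ : ℝ) : ℝ := (1/2) * Real.logb 2 ((1 - μ) * b22 INR21 ρ + 2) - 1/2
noncomputable def a51 (SNR1 INR12 INR21 ρ μ : ℝ) : ℝ :=
  (1/2) * Real.logb 2 (2 + SNR1 / INR21 + (1 - μ) * b21 INR12 ρ) - 1/2
noncomputable def a52 (SNR2 INR12 INR21 ρ μ : ℝ) : ℝ :=
  (1/2) * Real.logb 2 (2 + SNR2 / INR12 + (1 - μ) * b22 INR21 ρ) - 1/2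
noncomputable def a61 (SNR1 INR21 ρ μ : ℝ) : ℝ :=
  (1/2) * Real.logb 2 ((SNR1 / INR21) * ((1 - μ) * b22 INR21 ρ + 1) + 2) - 1/2
noncomputable def a62 (SNR2 INR12 ρ μ : ℝ) : ℝ :=
  (1/2) * Real.logb 2 ((SNR2 / INR12) * ((1 - μ) * b21 INR12 ρ + 1) + 2) - 1/2
noncomputable def a71 (SNR1 INR12 INR21 ρ μ1 μ2 : ℝ) : ℝ :=
  (1/2) * Real.logb 2
    ((SNR1 / INR21) * ((1 - μ1) * b22 INR21 ρ + 1) + (1 - μ2) * b21 INR12 ρ + 2) - 1/2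
noncomputable def a72 (SNR2 INR12 INR21 ρ μ1 μ2 : ℝ) : ℝ :=
  (1/2) * Real.logb 2
    ((SNR2 / INR12) * ((1 - μ2) * b21 INR12 ρ + 1) + (1 - μ1) * b22 INR21 ρ + 2) - 1/2

theorem aux_b_nonneg (I J ρ : ℝ) (hI : 1 < I)
    (h : ρ ≤ max (1 - max (1 / I) (1 / J)) 0) : 0 ≤ (1 - ρ) * I - 1 := by
  have hI0 : 0 < I := by linarith
  have h1 : 1 / I ≤ 1 := by rw [div_le_one hI0]; linarith
  have h2 : ρ ≤ 1 - 1 / I := by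
    refine h.trans (max_le ?_ (by linarith))
    have := le_max_left (1 / I) (1 / J)
    linarith
  have h3 : 1 / I * I ≤ (1 - ρ) * I := mul_le_mul_of_nonneg_right (by linarith) hI0.le
  rw [one_div_mul_cancel hI0.ne'] at h3
  linarith

theorem aux_logb_mono (x y : ℝ) (hx : 0 < x) (h : x ≤ y) : Real.logb 2 x ≤ Real.logb 2 y :=
  Real.logb_le_logb_of_le (by norm_num) hx h

theorem aux_logb_prod (p x : ℝ) (hp : 0 ≤ p) (hx : 0 < x) :
    Real.logb 2 (2 + x + p) + 1 ≤ Real.logb 2 (p + 2) + Real.logb 2 (2 + x) := by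
  have e : Real.logb 2 (2 : ℝ) = 1 := Real.logb_self_eq_one (by norm_num)
  rw [← Real.logb_mul (by positivity) (by positivity), ← e,
    ← Real.logb_mul (by positivity) (by positivity)]
  apply aux_logb_mono _ _ (by positivity)
  nlinarith [mul_nonneg hp hx.le]

/-- Simplification of the achievable sum-rate bound: the minimum of the five
retained sum-rate terms `M` is not increased by the other five terms. -/
theorem sum_rate_bound_simplification
    (SNR1 SNR2 bSNR1 bSNR2 INR12 INR21 : ℝ)
    (hS1 : 0 < SNR1) (hS2 : 0 < SNR2) (hb1 : 0 < bSNR1) (hb2 : 0 < bSNR2)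
    (h12 : 1 < INR12) (h21 : 1 < INR21) :
    ∀ ρ ∈ Set.Icc (0 : ℝ) (max (1 - max (1 / INR12) (1 / INR21)) 0),
    ∀ μ1 ∈ Set.Icc (0 : ℝ) 1, ∀ μ2 ∈ Set.Icc (0 : ℝ) 1,
    (min (a21 SNR1 INR12 ρ + a12 SNR2 INR12)
      (min (a11 SNR1 INR21 + a22 SNR2 INR21 ρ)
      (min (a31 SNR1 bSNR1 INR12 ρ μ2 + a11 SNR1 INR21 + a32 SNR2 bSNR2 INR21 ρ μ1 +
              a72 SNR2 INR12 INR21 ρ μ1 μ2)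
      (min (a31 SNR1 bSNR1 INR12 ρ μ2 + a51 SNR1 INR12 INR21 ρ μ2 +
              a32 SNR2 bSNR2 INR21 ρ μ1 + a52 SNR2 INR12 INR21 ρ μ1)
           (a31 SNR1 bSNR1 INR12 ρ μ2 + a71 SNR1 INR12 INR21 ρ μ1 μ2 +
              a32 SNR2 bSNR2 INR21 ρ μ1 + a12 SNR2 INR12))))
      ≤ a21 SNR1 INR12 ρ + a62 SNR2 INR12 ρ μ2) ∧
    (min (a21 SNR1 INR12 ρ + a12 SNR2 INR12)
      (min (a11 SNR1 INR21 + a22 SNR2 INR21 ρ)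
      (min (a31 SNR1 bSNR1 INR12 ρ μ2 + a11 SNR1 INR21 + a32 SNR2 bSNR2 INR21 ρ μ1 +
              a72 SNR2 INR12 INR21 ρ μ1 μ2)
      (min (a31 SNR1 bSNR1 INR12 ρ μ2 + a51 SNR1 INR12 INR21 ρ μ2 +
              a32 SNR2 bSNR2 INR21 ρ μ1 + a52 SNR2 INR12 INR21 ρ μ1)
           (a31 SNR1 bSNR1 INR12 ρ μ2 + a71 SNR1 INR12 INR21 ρ μ1 μ2 +
              a32 SNR2 bSNR2 INR21 ρ μ1 + a12 SNR2 INR12))))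
      ≤ a61 SNR1 INR21 ρ μ1 + a22 SNR2 INR21 ρ) ∧
    (min (a21 SNR1 INR12 ρ + a12 SNR2 INR12)
      (min (a11 SNR1 INR21 + a22 SNR2 INR21 ρ)
      (min (a31 SNR1 bSNR1 INR12 ρ μ2 + a11 SNR1 INR21 + a32 SNR2 bSNR2 INR21 ρ μ1 +
              a72 SNR2 INR12 INR21 ρ μ1 μ2)
      (min (a31 SNR1 bSNR1 INR12 ρ μ2 + a51 SNR1 INR12 INR21 ρ μ2 +
              a32 SNR2 bSNR2 INR21 ρ μ1 + a52 SNR2 INR12 INR21 ρ μ1)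
           (a31 SNR1 bSNR1 INR12 ρ μ2 + a71 SNR1 INR12 INR21 ρ μ1 μ2 +
              a32 SNR2 bSNR2 INR21 ρ μ1 + a12 SNR2 INR12))))
      ≤ a31 SNR1 bSNR1 INR12 ρ μ2 + a41 INR12 ρ μ2 + a11 SNR1 INR21 +
          a32 SNR2 bSNR2 INR21 ρ μ1 + a52 SNR2 INR12 INR21 ρ μ1) ∧
    (min (a21 SNR1 INR12 ρ + a12 SNR2 INR12)
      (min (a11 SNR1 INR21 + a22 SNR2 INR21 ρ)
      (min (a31 SNR1 bSNR1 INR12 ρ μ2 + a11 SNR1 INR21 + a32 SNR2 bSNR2 INR21 ρ μ1 +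
              a72 SNR2 INR12 INR21 ρ μ1 μ2)
      (min (a31 SNR1 bSNR1 INR12 ρ μ2 + a51 SNR1 INR12 INR21 ρ μ2 +
              a32 SNR2 bSNR2 INR21 ρ μ1 + a52 SNR2 INR12 INR21 ρ μ1)
           (a31 SNR1 bSNR1 INR12 ρ μ2 + a71 SNR1 INR12 INR21 ρ μ1 μ2 +
              a32 SNR2 bSNR2 INR21 ρ μ1 + a12 SNR2 INR12))))
      ≤ a31 SNR1 bSNR1 INR12 ρ μ2 + a71 SNR1 INR12 INR21 ρ μ1 μ2 +
          a32 SNR2 bSNR2 INR21 ρ μ1 + a52 SNR2 INR12 INR21 ρ μ1) ∧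
    (min (a21 SNR1 INR12 ρ + a12 SNR2 INR12)
      (min (a11 SNR1 INR21 + a22 SNR2 INR21 ρ)
      (min (a31 SNR1 bSNR1 INR12 ρ μ2 + a11 SNR1 INR21 + a32 SNR2 bSNR2 INR21 ρ μ1 +
              a72 SNR2 INR12 INR21 ρ μ1 μ2)
      (min (a31 SNR1 bSNR1 INR12 ρ μ2 + a51 SNR1 INR12 INR21 ρ μ2 +
              a32 SNR2 bSNR2 INR21 ρ μ1 + a52 SNR2 INR12 INR21 ρ μ1)
           (a31 SNR1 bSNR1 INR12 ρ μ2 + a71 SNR1 INR12 INR21 ρ μ1 μ2 +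
              a32 SNR2 bSNR2 INR21 ρ μ1 + a12 SNR2 INR12))))
      ≤ a31 SNR1 bSNR1 INR12 ρ μ2 + a51 SNR1 INR12 INR21 ρ μ2 +
          a32 SNR2 bSNR2 INR21 ρ μ1 + a42 INR21 ρ μ1 + a12 SNR2 INR12) ∧
    (min (a21 SNR1 INR12 ρ + a12 SNR2 INR12)
      (min (a11 SNR1 INR21 + a22 SNR2 INR21 ρ)
      (min (a31 SNR1 bSNR1 INR12 ρ μ2 + a11 SNR1 INR21 + a32 SNR2 bSNR2 INR21 ρ μ1 +
              a72 SNR2 INR12 INR21 ρ μ1 μ2)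
      (min (a31 SNR1 bSNR1 INR12 ρ μ2 + a51 SNR1 INR12 INR21 ρ μ2 +
              a32 SNR2 bSNR2 INR21 ρ μ1 + a52 SNR2 INR12 INR21 ρ μ1)
      (min (a31 SNR1 bSNR1 INR12 ρ μ2 + a71 SNR1 INR12 INR21 ρ μ1 μ2 +
              a32 SNR2 bSNR2 INR21 ρ μ1 + a12 SNR2 INR12)
      (min (a21 SNR1 INR12 ρ + a62 SNR2 INR12 ρ μ2)
      (min (a61 SNR1 INR21 ρ μ1 + a22 SNR2 INR21 ρ)
      (min (a31 SNR1 bSNR1 INR12 ρ μ2 + a41 INR12 ρ μ2 + a11 SNR1 INR21 +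
              a32 SNR2 bSNR2 INR21 ρ μ1 + a52 SNR2 INR12 INR21 ρ μ1)
      (min (a31 SNR1 bSNR1 INR12 ρ μ2 + a71 SNR1 INR12 INR21 ρ μ1 μ2 +
              a32 SNR2 bSNR2 INR21 ρ μ1 + a52 SNR2 INR12 INR21 ρ μ1)
           (a31 SNR1 bSNR1 INR12 ρ μ2 + a51 SNR1 INR12 INR21 ρ μ2 +
              a32 SNR2 bSNR2 INR21 ρ μ1 + a42 INR21 ρ μ1 + a12 SNR2 INR12)))))))))
      = min (a21 SNR1 INR12 ρ + a12 SNR2 INR12)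
          (min (a11 SNR1 INR21 + a22 SNR2 INR21 ρ)
          (min (a31 SNR1 bSNR1 INR12 ρ μ2 + a11 SNR1 INR21 + a32 SNR2 bSNR2 INR21 ρ μ1 +
                  a72 SNR2 INR12 INR21 ρ μ1 μ2)
          (min (a31 SNR1 bSNR1 INR12 ρ μ2 + a51 SNR1 INR12 INR21 ρ μ2 +
                  a32 SNR2 bSNR2 INR21 ρ μ1 + a52 SNR2 INR12 INR21 ρ μ1)
               (a31 SNR1 bSNR1 INR12 ρ μ2 + a71 SNR1 INR12 INR21 ρ μ1 μ2 +
                  a32 SNR2 bSNR2 INR21 ρ μ1 + a12 SNR2 INR12))))) := by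
  intro ρ hρ μ1 hμ1 μ2 hμ2
  have B1 : 0 ≤ b21 INR12 ρ := aux_b_nonneg _ _ _ h12 hρ.2
  have B2 : 0 ≤ b22 INR21 ρ := aux_b_nonneg INR21 INR12 _ h21 (by rw [max_comm (1 / INR21)]; exact hρ.2)
  have P : 0 ≤ (1 - μ2) * b21 INR12 ρ := mul_nonneg (by linarith [hμ2.2]) B1
  have Q : 0 ≤ (1 - μ1) * b22 INR21 ρ := mul_nonneg (by linarith [hμ1.2]) B2
  have X : 0 < SNR1 / INR21 := div_pos hS1 (by linarith)
  have Y : 0 < SNR2 / INR12 := div_pos hS2 (by linarith)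
  have k1 : a12 SNR2 INR12 ≤ a62 SNR2 INR12 ρ μ2 := by
    have := aux_logb_mono (2 + SNR2 / INR12)
      ((SNR2 / INR12) * ((1 - μ2) * b21 INR12 ρ + 1) + 2) (by linarith)
      (by nlinarith [mul_nonneg Y.le P])
    unfold a12 a62; linarith
  have k2 : a11 SNR1 INR21 ≤ a61 SNR1 INR21 ρ μ1 := by
    have := aux_logb_mono (2 + SNR1 / INR21)
      ((SNR1 / INR21) * ((1 - μ1) * b22 INR21 ρ + 1) + 2) (by linarith)
      (by nlinarith [mul_nonneg X.le Q])
    unfold a11 a61; linarith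
  have k3 : a51 SNR1 INR12 INR21 ρ μ2 ≤ a41 INR12 ρ μ2 + a11 SNR1 INR21 := by
    have := aux_logb_prod _ _ P X
    unfold a51 a41 a11; linarith
  have k4 : a12 SNR2 INR12 ≤ a52 SNR2 INR12 INR21 ρ μ1 := by
    have := aux_logb_mono (2 + SNR2 / INR12)
      (2 + SNR2 / INR12 + (1 - μ1) * b22 INR21 ρ) (by linarith) (by linarith)
    unfold a12 a52; linarith
  have k5 : a52 SNR2 INR12 INR21 ρ μ1 ≤ a42 INR21 ρ μ1 + a12 SNR2 INR12 := by
    have := aux_logb_prod _ _ Q Y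
    unfold a52 a42 a12; linarith
  have key : ∀ t1 t2 t3 t4 t5 u1 u2 u3 u4 u5 : ℝ, t1 ≤ u1 → t2 ≤ u2 → t4 ≤ u3 → t5 ≤ u4 →
      t4 ≤ u5 →
      (min t1 (min t2 (min t3 (min t4 t5))) ≤ u1) ∧ (min t1 (min t2 (min t3 (min t4 t5))) ≤ u2) ∧
      (min t1 (min t2 (min t3 (min t4 t5))) ≤ u3) ∧ (min t1 (min t2 (min t3 (min t4 t5))) ≤ u4) ∧
      (min t1 (min t2 (min t3 (min t4 t5))) ≤ u5) ∧
      min t1 (min t2 (min t3 (min t4 (min t5 (min u1 (min u2 (min u3 (min u4 u5)))))))) =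
        min t1 (min t2 (min t3 (min t4 t5))) := by
    intro t1 t2 t3 t4 t5 u1 u2 u3 u4 u5 g1 g2 g3 g4 g5
    have m1 : min t1 (min t2 (min t3 (min t4 t5))) ≤ t1 := by simp
    have m2 : min t1 (min t2 (min t3 (min t4 t5))) ≤ t2 := by simp
    have m3 : min t1 (min t2 (min t3 (min t4 t5))) ≤ t3 := by simp
    have m4 : min t1 (min t2 (min t3 (min t4 t5))) ≤ t4 := by simp
    have m5 : min t1 (min t2 (min t3 (min t4 t5))) ≤ t5 := by simp
    refine ⟨m1.trans g1, m2.trans g2, m4.trans g3, m5.trans g4, m4.trans g5, le_antisymm ?_ ?_⟩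
    · simp only [le_min_iff]
      simp
    · exact le_min m1 (le_min m2 (le_min m3 (le_min m4 (le_min m5 (le_min (m1.trans g1)
        (le_min (m2.trans g2) (le_min (m4.trans g3) (le_min (m5.trans g4) (m4.trans g5)))))))))
  exact key _ _ _ _ _ _ _ _ _ _ (by linarith) (by linarith) (by linarith) (by linarith)
    (by linarith)
end

section
/- Fix real numbers SNR1, SNR2 > 0, bSNR1, bSNR2 > 0, and INR12, INR21 > 1. For each i ∈ {1,2} (j the other index), the function ρ ↦ κ_{3,i}(ρ) = (1/2)·log((b_{4,i}(ρ)+b_{5,j}(ρ)+1)·bSNR_j/((b_{1,j}(1)+1)·(b_{4,i}(ρ)+1)) + 1) + (1/2)·log(b_{4,i}(ρ)+1) is monotonically nonincreasing on the interval [0,1]. -/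
theorem kappa3_aux (S B I C : ℝ) (hS : 0 < S) (hB : 0 < B) (hI : 1 < I) (hC : 0 < C) :
    AntitoneOn (fun ρ : ℝ =>
      (1/2) * Real.logb 2
        ((((1 - ρ^2) * S + (1 - ρ^2) * I + 1) * B) / (C * ((1 - ρ^2) * S + 1)) + 1) +
      (1/2) * Real.logb 2 ((1 - ρ^2) * S + 1)) (Set.Icc (0 : ℝ) 1) := by
  have hI0 : 0 < I := by linarith
  have key : ∀ t : ℝ, 0 ≤ t →
      (1/2) * Real.logb 2 (((t * S + t * I + 1) * B) / (C * (t * S + 1)) + 1) +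
      (1/2) * Real.logb 2 (t * S + 1) =
      (1/2) * Real.logb 2 ((t * S + t * I + 1) * B / C + (t * S + 1)) := by
    intro t ht
    have h1 : 0 < t * S + 1 := by positivity
    have h2 : 0 < ((t * S + t * I + 1) * B) / (C * (t * S + 1)) + 1 := by positivity
    rw [← mul_add, ← Real.logb_mul h2.ne' h1.ne']
    congr 2
    field_simp
  intro a ha b hb hab
  have hb' : 0 ≤ 1 - b^2 := by nlinarith [hb.1, hb.2]
  have hab' : 1 - b^2 ≤ 1 - a^2 := by nlinarith [ha.1, hb.1]
  have ha' : 0 ≤ 1 - a^2 := hb'.trans hab'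
  simp only
  rw [key _ ha', key _ hb']
  generalize 1 - a^2 = s at *
  generalize 1 - b^2 = t at *
  have : 0 < (t * S + t * I + 1) * B / C + (t * S + 1) := by positivity
  have h2 : (t * S + t * I + 1) * B / C + (t * S + 1) ≤
      (s * S + s * I + 1) * B / C + (s * S + 1) := by gcongr
  have := Real.logb_le_logb_of_le (b := 2) (by norm_num) this h2
  linarith

/-- For each `i ∈ {1,2}`, the converse bound `κ_{3,i}` is a monotonically
nonincreasing function of `ρ` on `[0,1]`. -/
theorem kappa3_antitone
    (SNR1 SNR2 bSNR1 bSNR2 INR12 INR21 : ℝ)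
    (hS1 : 0 < SNR1) (hS2 : 0 < SNR2) (hb1 : 0 < bSNR1) (hb2 : 0 < bSNR2)
    (h12 : 1 < INR12) (h21 : 1 < INR21) :
    AntitoneOn (fun ρ : ℝ =>
      (1/2) * Real.logb 2
        ((((1 - ρ^2) * SNR1 + (1 - ρ^2) * INR21 + 1) * bSNR2) /
          ((SNR2 + 2 * Real.sqrt (SNR2 * INR21) + INR21 + 1) * ((1 - ρ^2) * SNR1 + 1)) + 1) +
      (1/2) * Real.logb 2 ((1 - ρ^2) * SNR1 + 1)) (Set.Icc (0 : ℝ) 1) ∧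
    AntitoneOn (fun ρ : ℝ =>
      (1/2) * Real.logb 2
        ((((1 - ρ^2) * SNR2 + (1 - ρ^2) * INR12 + 1) * bSNR1) /
          ((SNR1 + 2 * Real.sqrt (SNR1 * INR12) + INR12 + 1) * ((1 - ρ^2) * SNR2 + 1)) + 1) +
      (1/2) * Real.logb 2 ((1 - ρ^2) * SNR2 + 1)) (Set.Icc (0 : ℝ) 1) := by
  have p12 : 0 < INR12 := by linarith
  have p21 : 0 < INR21 := by linarith
  exact ⟨kappa3_aux SNR1 bSNR2 INR21 _ hS1 hb2 h21 (by positivity),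
    kappa3_aux SNR2 bSNR1 INR12 _ hS2 hb1 h12 (by positivity)⟩
end

section
/- Fix real numbers SNR1, SNR2 > 0, bSNR2 > 0, and INR21 > 1. For every ρ ∈ [0,1], κ_{3,1}(ρ) = (1/2)·log((b_{4,1}(ρ)+b_{5,2}(ρ)+1)·bSNR2/((b_{1,2}(1)+1)·(b_{4,1}(ρ)+1)) + 1) + (1/2)·log(b_{4,1}(ρ)+1) ≤ (1/2)·log(bSNR2·(SNR1 + INR21 + 1)/(SNR2 + INR21 + 1) + SNR1 + 1). -/
/-- Upper bound on the converse bound `κ_{3,1}(ρ)` for `ρ ∈ [0,1]`. -/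
theorem kappa31_upper_bound
    (SNR1 SNR2 bSNR2 INR21 : ℝ)
    (hS1 : 0 < SNR1) (hS2 : 0 < SNR2) (hb2 : 0 < bSNR2) (h21 : 1 < INR21) :
    ∀ ρ ∈ Set.Icc (0 : ℝ) 1,
    (1/2) * Real.logb 2
      ((((1 - ρ^2) * SNR1 + (1 - ρ^2) * INR21 + 1) * bSNR2) /
        (((SNR2 + 2 * Real.sqrt (SNR2 * INR21) + INR21) + 1) * ((1 - ρ^2) * SNR1 + 1)) + 1) +
      (1/2) * Real.logb 2 ((1 - ρ^2) * SNR1 + 1) ≤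
      (1/2) * Real.logb 2
        (bSNR2 * (SNR1 + INR21 + 1) / (SNR2 + INR21 + 1) + SNR1 + 1) := by
  intro ρ hρ
  obtain ⟨h0, h1⟩ := hρ
  have ht0 : 0 ≤ 1 - ρ^2 := by nlinarith
  have ht1 : 1 - ρ^2 ≤ 1 := by nlinarith
  generalize 1 - ρ^2 = t at ht0 ht1 ⊢
  have hs : 0 ≤ Real.sqrt (SNR2 * INR21) := Real.sqrt_nonneg _
  generalize Real.sqrt (SNR2 * INR21) = q at hs ⊢
  have hI : 0 < INR21 := by linarith
  have hA : 0 < t * SNR1 + 1 := by positivity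
  have hD : 0 < (SNR2 + 2 * q + INR21) + 1 := by positivity
  have hN : 0 < t * SNR1 + t * INR21 + 1 := by positivity
  rw [← mul_add, ← Real.logb_mul (by positivity) hA.ne']
  apply mul_le_mul_of_nonneg_left _ (by norm_num)
  apply Real.logb_le_logb_of_le (by norm_num) (by positivity)
  have e : ((t * SNR1 + t * INR21 + 1) * bSNR2 /
      (((SNR2 + 2 * q + INR21) + 1) * (t * SNR1 + 1)) + 1) * (t * SNR1 + 1)
      = bSNR2 * (t * SNR1 + t * INR21 + 1) / ((SNR2 + 2 * q + INR21) + 1) + (t * SNR1 + 1) := by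
    field_simp
  have hx : t * SNR1 ≤ SNR1 := by nlinarith
  have hy : t * INR21 ≤ INR21 := by nlinarith
  have key : bSNR2 * (t * SNR1 + t * INR21 + 1) / ((SNR2 + 2 * q + INR21) + 1)
      ≤ bSNR2 * (SNR1 + INR21 + 1) / (SNR2 + INR21 + 1) := by
    apply div_le_div₀ (by positivity) _ (by positivity) (by linarith)
    exact mul_le_mul_of_nonneg_left (by linarith) hb2.le
  rw [e]
  linarith
end

section
/- Fix real numbers SNR1 > 0 and INR21 ≥ 1. Then a_{1,1} + a_{4,2}(0,0) ≥ (1/2)·log(SNR1 + INR21 + 1) − 1, where a_{1,1} = (1/2)·log(2 + SNR1/INR21) − 1/2 and a_{4,2}(0,0) = (1/2)·log(INR21 + 1) − 1/2. -/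
/-- Lower bound on the achievable bound `a_{1,1} + a_{4,2}(0,0)`. -/
theorem a11_add_a42_lower_bound
    (SNR1 INR21 : ℝ) (hS1 : 0 < SNR1) (h21 : 1 ≤ INR21) :
    ((1/2) * Real.logb 2 (2 + SNR1 / INR21) - 1/2) +
      ((1/2) * Real.logb 2 (INR21 + 1) - 1/2) ≥
      (1/2) * Real.logb 2 (SNR1 + INR21 + 1) - 1 := by
  have hI : 0 < INR21 := by linarith
  have hq : 0 < SNR1 / INR21 := div_pos hS1 hI
  have hm : SNR1 / INR21 * INR21 = SNR1 := div_mul_cancel₀ _ hI.ne'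
  have h1 : Real.logb 2 (SNR1 + INR21 + 1) ≤
      Real.logb 2 ((2 + SNR1 / INR21) * (INR21 + 1)) := by
    apply Real.logb_le_logb_of_le (by norm_num) (by linarith)
    nlinarith
  rw [Real.logb_mul (by linarith) (by linarith)] at h1
  linarith
end

section
/- Fix real numbers SNR1, SNR2 > 0 and INR21 > 1 with SNR1 ≥ INR21. For every ρ ∈ [0,1], κ_{2,1}(ρ) − a_{6,1}(0,0) ≤ 1, where κ_{2,1}(ρ) = (1/2)·log(1+b_{5,2}(ρ)) + (1/2)·log(1 + b_{4,1}(ρ)/(1+b_{5,2}(ρ))) and a_{6,1}(0,0) = (1/2)·log(SNR1 + 2) − 1/2. -/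
/-- Case 1.1.1 of the gap analysis: `κ_{2,1}(ρ) − a_{6,1}(0,0) ≤ 1` when `SNR1 ≥ INR21`. -/
theorem kappa21_sub_a61_le_one
    (SNR1 SNR2 INR21 : ℝ)
    (hS1 : 0 < SNR1) (hS2 : 0 < SNR2) (h21 : 1 < INR21) (hSI : SNR1 ≥ INR21) :
    ∀ ρ ∈ Set.Icc (0 : ℝ) 1,
    ((1/2) * Real.logb 2 (1 + (1 - ρ^2) * INR21) +
      (1/2) * Real.logb 2 (1 + ((1 - ρ^2) * SNR1) / (1 + (1 - ρ^2) * INR21))) -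
      ((1/2) * Real.logb 2 (SNR1 + 2) - 1/2) ≤ 1 := by
  rintro ρ ⟨h0, h1⟩
  have ht0 : 0 ≤ 1 - ρ^2 := by nlinarith
  have ht1 : 1 - ρ^2 ≤ 1 := by nlinarith [sq_nonneg ρ]
  generalize 1 - ρ^2 = t at ht0 ht1
  have hb : 0 ≤ t * INR21 := mul_nonneg ht0 (by linarith)
  have ha : 0 ≤ t * SNR1 := mul_nonneg ht0 hS1.le
  have hb1 : t * INR21 ≤ INR21 := mul_le_of_le_one_left (by linarith) ht1
  have ha1 : t * SNR1 ≤ SNR1 := mul_le_of_le_one_left hS1.le ht1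
  have hp : 0 < 1 + t * INR21 := by linarith
  have hq : 0 < 1 + t * SNR1 / (1 + t * INR21) := by positivity
  have e : Real.logb 2 (1 + t * INR21) + Real.logb 2 (1 + t * SNR1 / (1 + t * INR21))
      = Real.logb 2 (1 + t * INR21 + t * SNR1) := by
    rw [← Real.logb_mul hp.ne' hq.ne']
    congr 1
    field_simp
  have e2 : Real.logb 2 (2 * (SNR1 + 2)) = 1 + Real.logb 2 (SNR1 + 2) := by
    rw [Real.logb_mul (by norm_num) (by linarith), Real.logb_self_eq_one (by norm_num)]
  have l : Real.logb 2 (1 + t * INR21 + t * SNR1) ≤ Real.logb 2 (2 * (SNR1 + 2)) :=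
    Real.logb_le_logb_of_le (by norm_num) (by linarith) (by linarith)
  linarith
end

section
/- Fix real numbers SNR1, SNR2 > 0, bSNR2 > 0, and INR21 > 1, and assume bSNR2 ≤ SNR1 and SNR1 ≤ SNR2. For every ρ ∈ [0,1], κ_{3,1}(ρ) − a_{6,1}(0,0) ≤ 1, where κ_{3,1}(ρ) = (1/2)·log((b_{4,1}(ρ)+b_{5,2}(ρ)+1)·bSNR2/((b_{1,2}(1)+1)·(b_{4,1}(ρ)+1)) + 1) + (1/2)·log(b_{4,1}(ρ)+1) and a_{6,1}(0,0) = (1/2)·log(SNR1 + 2) − 1/2. -/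
/-- Case 1.1.2 / 1.1.3.2 of the gap analysis:
`κ_{3,1}(ρ) − a_{6,1}(0,0) ≤ 1` when `bSNR2 ≤ SNR1` and `SNR1 ≤ SNR2`. -/
theorem kappa31_sub_a61_le_one
    (SNR1 SNR2 bSNR2 INR21 : ℝ)
    (hS1 : 0 < SNR1) (hS2 : 0 < SNR2) (hb2 : 0 < bSNR2) (h21 : 1 < INR21)
    (hbS : bSNR2 ≤ SNR1) (hSS : SNR1 ≤ SNR2) :
    ∀ ρ ∈ Set.Icc (0 : ℝ) 1,
    ((1/2) * Real.logb 2
      ((((1 - ρ^2) * SNR1 + (1 - ρ^2) * INR21 + 1) * bSNR2) /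
        (((SNR2 + 2 * Real.sqrt (SNR2 * INR21) + INR21) + 1) * ((1 - ρ^2) * SNR1 + 1)) + 1) +
      (1/2) * Real.logb 2 ((1 - ρ^2) * SNR1 + 1)) -
      ((1/2) * Real.logb 2 (SNR1 + 2) - 1/2) ≤ 1 := by
  intro ρ hρ
  obtain ⟨h0, h1⟩ := hρ
  obtain ⟨t, ht⟩ : ∃ t, t = 1 - ρ^2 := ⟨_, rfl⟩
  have ht0 : 0 ≤ t := by nlinarith
  have ht1 : t ≤ 1 := by nlinarith
  rw [← ht]
  have hq : 0 ≤ Real.sqrt (SNR2 * INR21) := Real.sqrt_nonneg _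
  generalize Real.sqrt (SNR2 * INR21) = q at hq
  have hI : 0 < INR21 := by linarith
  have hS : 0 ≤ t * SNR1 := by positivity
  have hS' : t * SNR1 ≤ SNR1 := by nlinarith
  have hI' : t * INR21 ≤ INR21 := by nlinarith
  have hN : 0 ≤ t * SNR1 + t * INR21 + 1 := by positivity
  have hD : 0 < SNR2 + 2 * q + INR21 + 1 := by positivity
  have hA : 0 < t * SNR1 + 1 := by positivity
  have hX : 0 < ((t * SNR1 + t * INR21 + 1) * bSNR2) /
        ((SNR2 + 2 * q + INR21 + 1) * (t * SNR1 + 1)) + 1 := by positivity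
  have hle : (((t * SNR1 + t * INR21 + 1) * bSNR2) /
        ((SNR2 + 2 * q + INR21 + 1) * (t * SNR1 + 1)) + 1) * (t * SNR1 + 1)
        ≤ 2 * (SNR1 + 2) := by
    have e : (((t * SNR1 + t * INR21 + 1) * bSNR2) /
        ((SNR2 + 2 * q + INR21 + 1) * (t * SNR1 + 1)) + 1) * (t * SNR1 + 1)
        = ((t * SNR1 + t * INR21 + 1) * bSNR2) / (SNR2 + 2 * q + INR21 + 1)
          + (t * SNR1 + 1) := by
      field_simp
    have h2 : ((t * SNR1 + t * INR21 + 1) * bSNR2) / (SNR2 + 2 * q + INR21 + 1) ≤ bSNR2 := by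
      rw [div_le_iff₀ hD, mul_comm]
      exact mul_le_mul_of_nonneg_left (by linarith) hb2.le
    rw [e]
    linarith
  have hlog := Real.logb_le_logb_of_le (b := 2) (by norm_num) (mul_pos hX hA) hle
  rw [Real.logb_mul hX.ne' hA.ne', Real.logb_mul (by norm_num) (by positivity),
    Real.logb_self_eq_one (by norm_num)] at hlog
  linarith
end

section
/- Fix real numbers SNR1, SNR2 > 0, bSNR2 > 0, and INR21 > 1, and assume bSNR2 ≤ SNR1 and SNR1 ≤ INR21. For every ρ ∈ [0,1], κ_{3,1}(ρ) − a_{6,1}(0,0) ≤ 3/2, where κ_{3,1}(ρ) = (1/2)·log((b_{4,1}(ρ)+b_{5,2}(ρ)+1)·bSNR2/((b_{1,2}(1)+1)·(b_{4,1}(ρ)+1)) + 1) + (1/2)·log(b_{4,1}(ρ)+1) and a_{6,1}(0,0) = (1/2)·log(SNR1 + 2) − 1/2. -/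
/-- Case 1.1.3.1 of the gap analysis:
`κ_{3,1}(ρ) − a_{6,1}(0,0) ≤ 3/2` when `bSNR2 ≤ SNR1` and `SNR1 ≤ INR21`. -/
theorem kappa31_sub_a61_le_three_halves
    (SNR1 SNR2 bSNR2 INR21 : ℝ)
    (hS1 : 0 < SNR1) (hS2 : 0 < SNR2) (hb2 : 0 < bSNR2) (h21 : 1 < INR21)
    (hbS : bSNR2 ≤ SNR1) (hSI : SNR1 ≤ INR21) :
    ∀ ρ ∈ Set.Icc (0 : ℝ) 1,
    ((1/2) * Real.logb 2
      ((((1 - ρ^2) * SNR1 + (1 - ρ^2) * INR21 + 1) * bSNR2) /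
        (((SNR2 + 2 * Real.sqrt (SNR2 * INR21) + INR21) + 1) * ((1 - ρ^2) * SNR1 + 1)) + 1) +
      (1/2) * Real.logb 2 ((1 - ρ^2) * SNR1 + 1)) -
      ((1/2) * Real.logb 2 (SNR1 + 2) - 1/2) ≤ 3/2 := by
  rintro ρ ⟨h0, h1⟩
  have ht0 : 0 ≤ 1 - ρ^2 := by nlinarith
  have ht1 : 1 - ρ^2 ≤ 1 := by nlinarith
  generalize 1 - ρ^2 = t at ht0 ht1 ⊢
  have hq := Real.sqrt_nonneg (SNR2 * INR21)
  generalize Real.sqrt (SNR2 * INR21) = q at hq ⊢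
  have hI : 0 < INR21 := by linarith
  have hA : 0 < t * SNR1 + 1 := by positivity
  have hD : 0 < SNR2 + 2 * q + INR21 + 1 := by positivity
  have hX : 0 < ((t * SNR1 + t * INR21 + 1) * bSNR2) /
        ((SNR2 + 2 * q + INR21 + 1) * (t * SNR1 + 1)) + 1 := by positivity
  have e1 : t * SNR1 ≤ SNR1 := mul_le_of_le_one_left hS1.le ht1
  have e2 : t * INR21 ≤ INR21 := mul_le_of_le_one_left hI.le ht1
  have key : (((t * SNR1 + t * INR21 + 1) * bSNR2) /
        ((SNR2 + 2 * q + INR21 + 1) * (t * SNR1 + 1)) + 1) * (t * SNR1 + 1)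
        ≤ 2 ^ 2 * (SNR1 + 2) := by
    have e3 : ((t * SNR1 + t * INR21 + 1) * bSNR2) /
        ((SNR2 + 2 * q + INR21 + 1) * (t * SNR1 + 1)) * (t * SNR1 + 1)
        = (t * SNR1 + t * INR21 + 1) * bSNR2 / (SNR2 + 2 * q + INR21 + 1) := by
      field_simp
    have e4 : (t * SNR1 + t * INR21 + 1) * bSNR2 / (SNR2 + 2 * q + INR21 + 1)
        ≤ 2 * SNR1 := by
      rw [div_le_iff₀ hD]
      calc (t * SNR1 + t * INR21 + 1) * bSNR2
          ≤ (2 * (SNR2 + 2 * q + INR21 + 1)) * SNR1 := by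
            apply mul_le_mul _ hbS hb2.le (by positivity)
            linarith
        _ = _ := by ring
    rw [add_mul, e3]
    linarith
  have hl := Real.logb_le_logb_of_le (b := 2) (by norm_num) (mul_pos hX hA) key
  rw [Real.logb_mul hX.ne' hA.ne', Real.logb_mul (by norm_num) (by positivity),
    Real.logb_pow, Real.logb_self_eq_one (by norm_num)] at hl
  push_cast at hl
  linarith
end

section
/- Fix real numbers SNR1, SNR2 > 0, bSNR1, bSNR2 > 0, and INR12, INR21 > 1, and assume the high-interference and feedback conditions of Case 1.1: INR12 > SNR1, INR21 > SNR2, bSNR2 ≤ SNR1, and bSNR1 ≤ SNR2. Then for every ρ' ∈ [0,1], min(κ_{1,1}(ρ'), κ_{2,1}(ρ'), κ_{3,1}(ρ')) − min(a_{2,1}(0), a_{6,1}(0,0) + a_{3,2}(0,0), a_{1,1} + a_{3,2}(0,0) + a_{4,2}(0,0)) ≤ 3/2. (Here a_{3,2}(0,0) = 0, a_{2,1}(0) = (1/2)·log(SNR1+INR12+1) − 1/2, a_{6,1}(0,0) = (1/2)·log(SNR1+2) − 1/2, a_{1,1} = (1/2)·log(2+SNR1/INR21) − 1/2, and a_{4,2}(0,0)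 = (1/2)·log(INR21+1) − 1/2.) -/
theorem aux_logb {x y : ℝ} (hx : 0 < x) (hy : 0 < y) (h : x ≤ 4 * y) :
    Real.logb 2 x ≤ 2 + Real.logb 2 y := by
  have h1 : Real.logb 2 x ≤ Real.logb 2 (4 * y) :=
    Real.logb_le_logb_of_le (by norm_num) hx h
  rw [Real.logb_mul (by norm_num) hy.ne'] at h1
  have h4 : Real.logb 2 4 = 2 := by
    rw [show (4:ℝ) = 2 ^ (2:ℕ) by norm_num, Real.logb_pow, Real.logb_self_eq_one (by norm_num)]
    norm_num
  linarith

/-- Single-rate gap in Case 1.1: the active converse single-rate bound exceeds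
the active achievable single-rate bound by at most `3/2` bits. -/
theorem single_rate_gap_case11
    (SNR1 SNR2 bSNR1 bSNR2 INR12 INR21 : ℝ)
    (hS1 : 0 < SNR1) (hS2 : 0 < SNR2) (hb1 : 0 < bSNR1) (hb2 : 0 < bSNR2)
    (h12 : 1 < INR12) (h21 : 1 < INR21)
    (hHIR1 : INR12 > SNR1) (hHIR2 : INR21 > SNR2)
    (hFB1 : bSNR2 ≤ SNR1) (hFB2 : bSNR1 ≤ SNR2) :
    ∀ ρ' ∈ Set.Icc (0 : ℝ) 1,
    min ((1/2) * Real.logb 2 (SNR1 + 2 * ρ' * Real.sqrt (SNR1 * INR12) + INR12 + 1))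
      (min ((1/2) * Real.logb 2 (1 + (1 - ρ'^2) * INR21) +
            (1/2) * Real.logb 2 (1 + ((1 - ρ'^2) * SNR1) / (1 + (1 - ρ'^2) * INR21)))
           ((1/2) * Real.logb 2
              ((((1 - ρ'^2) * SNR1 + (1 - ρ'^2) * INR21 + 1) * bSNR2) /
                (((SNR2 + 2 * Real.sqrt (SNR2 * INR21) + INR21) + 1) *
                  ((1 - ρ'^2) * SNR1 + 1)) + 1) +
            (1/2) * Real.logb 2 ((1 - ρ'^2) * SNR1 + 1))) -
    min ((1/2) * Real.logb 2 (SNR1 + INR12 + 1) - 1/2)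
      (min (((1/2) * Real.logb 2 (SNR1 + 2) - 1/2) + 0)
           (((1/2) * Real.logb 2 (2 + SNR1 / INR21) - 1/2) + 0 +
            ((1/2) * Real.logb 2 (INR21 + 1) - 1/2))) ≤ 3/2 := by
  intro ρ hρ
  obtain ⟨h0, h1⟩ := hρ
  have ht0 : 0 ≤ 1 - ρ^2 := by nlinarith
  have ht1 : 1 - ρ^2 ≤ 1 := by nlinarith
  generalize 1 - ρ^2 = t at ht0 ht1
  have hI : 0 < INR21 := by linarith
  have htS : t * SNR1 ≤ SNR1 := by nlinarith
  have htI : t * INR21 ≤ INR21 := by nlinarith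
  have htS0 : 0 ≤ t * SNR1 := by positivity
  have htI0 : 0 ≤ t * INR21 := by positivity
  have hq0 : 0 ≤ Real.sqrt (SNR1 * INR12) := Real.sqrt_nonneg _
  have hq : 2 * Real.sqrt (SNR1 * INR12) ≤ SNR1 + INR12 := by
    have : Real.sqrt (SNR1 * INR12) ≤ (SNR1 + INR12) / 2 := by
      apply Real.sqrt_le_iff.mpr
      constructor
      · linarith
      · nlinarith [sq_nonneg (SNR1 - INR12)]
    linarith
  have hq' : ρ * Real.sqrt (SNR1 * INR12) ≤ Real.sqrt (SNR1 * INR12) := by nlinarith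
  have hq'' : 0 ≤ ρ * Real.sqrt (SNR1 * INR12) := by positivity
  have hr0 : 0 ≤ Real.sqrt (SNR2 * INR21) := Real.sqrt_nonneg _
  generalize Real.sqrt (SNR2 * INR21) = r at hr0
  have k2 : (1/2) * Real.logb 2 (1 + t * INR21) +
      (1/2) * Real.logb 2 (1 + (t * SNR1) / (1 + t * INR21))
      = (1/2) * Real.logb 2 (1 + t * INR21 + t * SNR1) := by
    rw [← mul_add, ← Real.logb_mul (by positivity) (by positivity)]
    congr 2
    field_simp
  have k3 : (1/2) * Real.logb 2
        (((t * SNR1 + t * INR21 + 1) * bSNR2) /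
          (((SNR2 + 2 * r + INR21) + 1) * (t * SNR1 + 1)) + 1) +
      (1/2) * Real.logb 2 (t * SNR1 + 1)
      = (1/2) * Real.logb 2 ((t * SNR1 + t * INR21 + 1) * bSNR2 / (SNR2 + 2 * r + INR21 + 1)
          + (t * SNR1 + 1)) := by
    rw [← mul_add, ← Real.logb_mul (by positivity) (by positivity)]
    congr 2
    field_simp
  have a3 : (1/2) * Real.logb 2 (2 + SNR1 / INR21) + (1/2) * Real.logb 2 (INR21 + 1)
      = (1/2) * Real.logb 2 ((2 + SNR1 / INR21) * (INR21 + 1)) := by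
    rw [← mul_add, ← Real.logb_mul (by positivity) (by positivity)]
  rw [k2, k3, sub_le_iff_le_add, ← sub_le_iff_le_add']
  refine le_min ?_ (le_min ?_ ?_)
  · rw [sub_le_iff_le_add']
    refine (min_le_left _ _).trans ?_
    have := aux_logb (x := SNR1 + 2 * ρ * Real.sqrt (SNR1 * INR12) + INR12 + 1)
      (y := SNR1 + INR12 + 1) (by nlinarith) (by linarith) (by nlinarith)
    linarith
  · rw [sub_le_iff_le_add']
    refine (min_le_right _ _).trans ?_
    rcases le_total INR21 SNR1 with h | h
    · refine (min_le_left _ _).trans ?_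
      have := aux_logb (x := 1 + t * INR21 + t * SNR1)
        (y := SNR1 + 2) (by linarith) (by linarith) (by linarith)
      linarith
    · refine (min_le_right _ _).trans ?_
      have hd : (t * SNR1 + t * INR21 + 1) * bSNR2 / (SNR2 + 2 * r + INR21 + 1) ≤ 2 * SNR1 := by
        rw [div_le_iff₀ (by positivity)]
        calc (t * SNR1 + t * INR21 + 1) * bSNR2
            ≤ (2 * (SNR2 + 2 * r + INR21 + 1)) * SNR1 :=
              mul_le_mul (by linarith) hFB1 hb2.le (by positivity)
          _ = _ := by ring
      have := aux_logb (x := (t * SNR1 + t * INR21 + 1) * bSNR2 / (SNR2 + 2 * r + INR21 + 1)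
          + (t * SNR1 + 1))
        (y := SNR1 + 2) (by positivity) (by linarith) (by linarith)
      linarith
  · rw [sub_le_iff_le_add']
    refine (min_le_right _ _).trans ((min_le_left _ _).trans ?_)
    have e : (2 + SNR1 / INR21) * (INR21 + 1) = 2 * INR21 + 2 + SNR1 + SNR1 / INR21 := by
      field_simp
      ring
    have hp : 0 < SNR1 / INR21 := by positivity
    have hm : Real.logb 2 (1 + t * INR21 + t * SNR1) ≤
        Real.logb 2 ((2 + SNR1 / INR21) * (INR21 + 1)) :=
      Real.logb_le_logb_of_le (by norm_num) (by positivity) (by rw [e]; linarith)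
    linarith
end

section
/- Fix real numbers SNR1, SNR2 > 0 and INR12, INR21 > 1. For every ρ ∈ [0,1): κ_4(ρ) ≤ (1/2)·log(2 + SNR1/INR21) + (1/2)·log(SNR2 + INR21 + 1) + 1/2, and κ_5(ρ) ≤ (1/2)·log(2 + SNR2/INR12) + (1/2)·log(SNR1 + INR12 + 1) + 1/2. -/
theorem kappa_aux (S T I ρ : ℝ) (hS : 0 < S) (hT : 0 < T) (hI : 1 < I)
    (h0 : 0 ≤ ρ) (h1 : ρ < 1) :
    (1/2) * Real.logb 2 (1 + ((1 - ρ^2) * S) / (1 + (1 - ρ^2) * I)) +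
      (1/2) * Real.logb 2 ((T + 2 * ρ * Real.sqrt (T * I) + I) + 1) ≤
      (1/2) * Real.logb 2 (2 + S / I) +
        (1/2) * Real.logb 2 (T + I + 1) + 1/2 := by
  have hI0 : 0 < I := by linarith
  have hc : 0 < 1 - ρ^2 := by nlinarith
  have hA : ((1 - ρ^2) * S) / (1 + (1 - ρ^2) * I) ≤ S / I := by
    rw [div_le_div_iff₀ (by positivity) hI0]
    nlinarith
  have hApos : 0 < 1 + ((1 - ρ^2) * S) / (1 + (1 - ρ^2) * I) := by positivity
  have hs : 2 * Real.sqrt (T * I) ≤ T + I := by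
    rw [Real.sqrt_mul hT.le]
    nlinarith [sq_nonneg (Real.sqrt T - Real.sqrt I), Real.sq_sqrt hT.le, Real.sq_sqrt hI0.le]
  have hs0 := Real.sqrt_nonneg (T * I)
  have hB : (T + 2 * ρ * Real.sqrt (T * I) + I) + 1 ≤ 2 * (T + I + 1) := by
    nlinarith
  have hBpos : 0 < (T + 2 * ρ * Real.sqrt (T * I) + I) + 1 := by positivity
  have e1 := Real.logb_le_logb_of_le (b := 2) (by norm_num) hApos
    (show _ ≤ 2 + S / I by linarith)
  have e2 := Real.logb_le_logb_of_le (b := 2) (by norm_num) hBpos hB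
  rw [Real.logb_mul (by norm_num) (by positivity), Real.logb_self_eq_one (by norm_num)] at e2
  linarith

/-- Upper bounds on the converse sum-rate bounds `κ_4(ρ)` and `κ_5(ρ)` for `ρ ∈ [0,1)`. -/
theorem kappa4_kappa5_upper_bounds
    (SNR1 SNR2 INR12 INR21 : ℝ)
    (hS1 : 0 < SNR1) (hS2 : 0 < SNR2) (h12 : 1 < INR12) (h21 : 1 < INR21) :
    ∀ ρ ∈ Set.Ico (0 : ℝ) 1,
    ((1/2) * Real.logb 2 (1 + ((1 - ρ^2) * SNR1) / (1 + (1 - ρ^2) * INR21)) +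
      (1/2) * Real.logb 2 ((SNR2 + 2 * ρ * Real.sqrt (SNR2 * INR21) + INR21) + 1) ≤
      (1/2) * Real.logb 2 (2 + SNR1 / INR21) +
        (1/2) * Real.logb 2 (SNR2 + INR21 + 1) + 1/2) ∧
    ((1/2) * Real.logb 2 (1 + ((1 - ρ^2) * SNR2) / (1 + (1 - ρ^2) * INR12)) +
      (1/2) * Real.logb 2 ((SNR1 + 2 * ρ * Real.sqrt (SNR1 * INR12) + INR12) + 1) ≤
      (1/2) * Real.logb 2 (2 + SNR2 / INR12) +
        (1/2) * Real.logb 2 (SNR1 + INR12 + 1) + 1/2) := by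
  intro ρ hρ
  exact ⟨kappa_aux _ _ _ ρ hS1 hS2 h21 hρ.1 hρ.2, kappa_aux _ _ _ ρ hS2 hS1 h12 hρ.1 hρ.2⟩
end

section
/- Fix real numbers SNR1, SNR2 > 0, bSNR1, bSNR2 > 0, and INR12, INR21 > 1, and assume the high-interference and feedback conditions of Case 1.1: INR12 > SNR1, INR21 > SNR2, bSNR2 ≤ SNR1, and bSNR1 ≤ SNR2. Then for every ρ' ∈ [0,1), min(κ_4(ρ'), κ_5(ρ')) − min(a_{2,1}(0) + a_{1,2}, a_{1,1} + a_{2,2}(0), a_{5,1}(0,0) + a_{5,2}(0,0)) ≤ 2 + (1/2)·log(3). (Here a_{2,i}(0) = (1/2)·log(SNR_i + INR_ij + 1) − 1/2, a_{1,i} = (1/2)·log(2 + SNR_i/INR_ji) − 1/2, a_{5,1}(0,0) = (1/2)·log(SNR1/INR21 + INR12 + 1) − 1/2, and a_{5,2}(0,0) = (1/2)·log(SNR2/INR12 + INR21 + 1) − 1/2.) -/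
theorem aux_log {A B C D : ℝ} (hA : 0 < A) (hB : 0 < B) (hD : 0 < D) (h1 : A ≤ C)
    (h2 : B ≤ 4 * D) :
    (1/2) * Real.logb 2 A + (1/2) * Real.logb 2 B - (((1/2) * Real.logb 2 C - 1/2) +
      ((1/2) * Real.logb 2 D - 1/2)) ≤ 2 + (1/2) * Real.logb 2 3 := by
  have e1 : Real.logb 2 A ≤ Real.logb 2 C := Real.logb_le_logb_of_le (by norm_num) hA h1
  have e2 : Real.logb 2 B ≤ Real.logb 2 (4 * D) := Real.logb_le_logb_of_le (by norm_num) hB h2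
  have e3 : Real.logb 2 (4 * D) = 2 + Real.logb 2 D := by
    rw [Real.logb_mul (by norm_num) hD.ne']
    congr 1
    rw [show (4:ℝ) = 2 ^ (2:ℝ) by norm_num, Real.logb_rpow (by norm_num) (by norm_num)]
  have e4 : 0 ≤ Real.logb 2 3 := Real.logb_nonneg (by norm_num) (by norm_num)
  linarith

theorem aux_frac {t S I : ℝ} (ht : 0 ≤ t) (hS : 0 < S) (hI : 0 < I) :
    0 < 1 + (t * S) / (1 + t * I) ∧ 1 + (t * S) / (1 + t * I) ≤ 1 + S / I := by
  have hp : 0 < 1 + t * I := by positivity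
  refine ⟨by positivity, ?_⟩
  have : (t * S) / (1 + t * I) ≤ S / I := by
    rw [div_le_div_iff₀ hp hI]
    nlinarith
  linarith

theorem aux_sqrt {r S I : ℝ} (h0 : 0 ≤ r) (h1 : r < 1) (hS : 0 < S) (hI : 0 < I) :
    0 < S + 2 * r * Real.sqrt (S * I) + I + 1 ∧
    S + 2 * r * Real.sqrt (S * I) + I + 1 ≤ 2 * (S + I + 1) := by
  refine ⟨by positivity, ?_⟩
  have hs : 2 * Real.sqrt (S * I) ≤ S + I := by
    have : Real.sqrt (S * I) ≤ (S + I) / 2 :=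
      Real.sqrt_le_iff.2 ⟨by positivity, by nlinarith [sq_nonneg (S - I)]⟩
    linarith
  nlinarith [Real.sqrt_nonneg (S * I)]


/-- Sum-rate gap in Case 1.1: the active converse sum-rate bound exceeds the
active achievable sum-rate bound by at most `2 + (1/2)·log 3` bits. -/
theorem sum_rate_gap_case11
    (SNR1 SNR2 bSNR1 bSNR2 INR12 INR21 : ℝ)
    (hS1 : 0 < SNR1) (hS2 : 0 < SNR2) (hb1 : 0 < bSNR1) (hb2 : 0 < bSNR2)
    (h12 : 1 < INR12) (h21 : 1 < INR21)
    (hHIR1 : INR12 > SNR1) (hHIR2 : INR21 > SNR2)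
    (hFB1 : bSNR2 ≤ SNR1) (hFB2 : bSNR1 ≤ SNR2) :
    ∀ ρ' ∈ Set.Ico (0 : ℝ) 1,
    min ((1/2) * Real.logb 2 (1 + ((1 - ρ'^2) * SNR1) / (1 + (1 - ρ'^2) * INR21)) +
          (1/2) * Real.logb 2 ((SNR2 + 2 * ρ' * Real.sqrt (SNR2 * INR21) + INR21) + 1))
        ((1/2) * Real.logb 2 (1 + ((1 - ρ'^2) * SNR2) / (1 + (1 - ρ'^2) * INR12)) +
          (1/2) * Real.logb 2 ((SNR1 + 2 * ρ' * Real.sqrt (SNR1 * INR12) + INR12) + 1)) -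
    min (((1/2) * Real.logb 2 (SNR1 + INR12 + 1) - 1/2) +
          ((1/2) * Real.logb 2 (2 + SNR2 / INR12) - 1/2))
      (min (((1/2) * Real.logb 2 (2 + SNR1 / INR21) - 1/2) +
             ((1/2) * Real.logb 2 (SNR2 + INR21 + 1) - 1/2))
           (((1/2) * Real.logb 2 (SNR1 / INR21 + INR12 + 1) - 1/2) +
             ((1/2) * Real.logb 2 (SNR2 / INR12 + INR21 + 1) - 1/2))) ≤
    2 + (1/2) * Real.logb 2 3 := by
  intro r hr
  obtain ⟨h0, h1⟩ := hr
  have ht : 0 ≤ 1 - r ^ 2 := by nlinarith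
  have p12 : 0 < INR12 := by linarith
  have p21 : 0 < INR21 := by linarith
  obtain ⟨fa, fb⟩ := aux_frac ht hS1 p21
  obtain ⟨ga, gb⟩ := aux_frac ht hS2 p12
  obtain ⟨ua, ub⟩ := aux_sqrt h0 h1 hS2 p21
  obtain ⟨va, vb⟩ := aux_sqrt h0 h1 hS1 p12
  have q1 : 0 < SNR1 / INR21 := by positivity
  have q2 : 0 < SNR2 / INR12 := by positivity
  rw [sub_le_comm, le_min_iff, le_min_iff]
  refine ⟨?_, ?_, ?_⟩
  · rw [sub_le_comm]
    refine (sub_le_sub_right (min_le_right _ _) _).trans ?_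
    have := aux_log (C := 2 + SNR2 / INR12) (D := SNR1 + INR12 + 1) ga va (by linarith)
      (by linarith) (by linarith)
    linarith
  · rw [sub_le_comm]
    refine (sub_le_sub_right (min_le_left _ _) _).trans ?_
    exact aux_log fa ua (by linarith) (by linarith) (by linarith)
  · rw [sub_le_comm]
    refine (sub_le_sub_right (min_le_left _ _) _).trans ?_
    exact aux_log fa ua (by linarith) (by linarith) (by linarith)
end

section
/- Fix real numbers SNR1, SNR2 > 0 and INR12, INR21 > 1, and assume INR21 > SNR2. For every ρ ∈ [0,1), κ_{1,1}(ρ) + κ_4(ρ) ≤ (1/2)·log(SNR1 + INR12 + 1) + (1/2)·log(2 + SNR1/INR21) + (1/2)·log(INR21 + 1) + 3/2. -/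
/-- Upper bound on `κ_{1,1}(ρ) + κ_4(ρ)` for `ρ ∈ [0,1)` when `INR21 > SNR2`. -/
theorem kappa11_add_kappa4_upper_bound
    (SNR1 SNR2 INR12 INR21 : ℝ)
    (hS1 : 0 < SNR1) (hS2 : 0 < SNR2) (h12 : 1 < INR12) (h21 : 1 < INR21)
    (hHIR2 : INR21 > SNR2) :
    ∀ ρ ∈ Set.Ico (0 : ℝ) 1,
    (1/2) * Real.logb 2 ((SNR1 + 2 * ρ * Real.sqrt (SNR1 * INR12) + INR12) + 1) +
      ((1/2) * Real.logb 2 (1 + ((1 - ρ^2) * SNR1) / (1 + (1 - ρ^2) * INR21)) +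
        (1/2) * Real.logb 2 ((SNR2 + 2 * ρ * Real.sqrt (SNR2 * INR21) + INR21) + 1)) ≤
    (1/2) * Real.logb 2 (SNR1 + INR12 + 1) + (1/2) * Real.logb 2 (2 + SNR1 / INR21) +
      (1/2) * Real.logb 2 (INR21 + 1) + 3/2 := by
  intro ρ hρ
  obtain ⟨h0, h1⟩ := hρ
  have key : ∀ a b : ℝ, 0 < a → 0 < b → 2 * ρ * Real.sqrt (a * b) ≤ a + b := by
    intro a b ha hb
    have hs : Real.sqrt (a * b) ≤ (a + b) / 2 := by
      apply Real.sqrt_le_iff.mpr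
      constructor
      · positivity
      · nlinarith [sq_nonneg (a - b)]
    have hn := Real.sqrt_nonneg (a * b)
    nlinarith
  have k1 := key SNR1 INR12 hS1 (by linarith)
  have k2 := key SNR2 INR21 hS2 (by linarith)
  have hI12 : 0 < INR12 := by linarith
  have hI21 : 0 < INR21 := by linarith
  have hr : 0 < 1 - ρ ^ 2 := by nlinarith
  have e1 : Real.logb 2 ((SNR1 + 2 * ρ * Real.sqrt (SNR1 * INR12) + INR12) + 1)
      ≤ 1 + Real.logb 2 (SNR1 + INR12 + 1) := by
    have : 1 + Real.logb 2 (SNR1 + INR12 + 1) = Real.logb 2 (2 * (SNR1 + INR12 + 1)) := by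
      rw [Real.logb_mul (by norm_num) (by positivity), Real.logb_self_eq_one (by norm_num)]
    rw [this]
    exact Real.logb_le_logb_of_le (by norm_num) (by positivity) (by linarith)
  have e3 : Real.logb 2 ((SNR2 + 2 * ρ * Real.sqrt (SNR2 * INR21) + INR21) + 1)
      ≤ 2 + Real.logb 2 (INR21 + 1) := by
    have : 2 + Real.logb 2 (INR21 + 1) = Real.logb 2 (2 * (2 * (INR21 + 1))) := by
      rw [Real.logb_mul (by norm_num) (by positivity),
        Real.logb_mul (by norm_num) (by positivity), Real.logb_self_eq_one (by norm_num)]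
      ring
    rw [this]
    exact Real.logb_le_logb_of_le (by norm_num) (by positivity) (by linarith)
  have e2 : Real.logb 2 (1 + ((1 - ρ^2) * SNR1) / (1 + (1 - ρ^2) * INR21))
      ≤ Real.logb 2 (2 + SNR1 / INR21) := by
    apply Real.logb_le_logb_of_le (by norm_num) (by positivity)
    have : ((1 - ρ^2) * SNR1) / (1 + (1 - ρ^2) * INR21) ≤ SNR1 / INR21 := by
      rw [div_le_div_iff₀ (by positivity) (by positivity)]
      nlinarith
    linarith
  linarith
end

section
/- Fix real numbers SNR1, SNR2 > 0 and INR12, INR21 > 1, and assume INR21 > SNR2. For every ρ' ∈ [0,1), κ_{1,1}(ρ') + κ_4(ρ') − (a_{1,1} + a_{7,1}(0,0,0) + a_{5,2}(0,0)) ≤ 3, where a_{1,1} = (1/2)·log(2 + SNR1/INR21) − 1/2, a_{7,1}(0,0,0) = (1/2)·log(SNR1 + INR12 + 1) − 1/2, and a_{5,2}(0,0) = (1/2)·log(SNR2/INR12 + INR21 + 1) − 1/2. -/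
/-- Weighted sum-rate gap in Case 1.1:
`κ_{1,1}(ρ') + κ_4(ρ') − (a_{1,1} + a_{7,1}(0,0,0) + a_{5,2}(0,0)) ≤ 3`. -/
theorem weighted_sum_rate_gap_case11
    (SNR1 SNR2 INR12 INR21 : ℝ)
    (hS1 : 0 < SNR1) (hS2 : 0 < SNR2) (h12 : 1 < INR12) (h21 : 1 < INR21)
    (hHIR2 : INR21 > SNR2) :
    ∀ ρ' ∈ Set.Ico (0 : ℝ) 1,
    ((1/2) * Real.logb 2 ((SNR1 + 2 * ρ' * Real.sqrt (SNR1 * INR12) + INR12) + 1) +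
      ((1/2) * Real.logb 2 (1 + ((1 - ρ'^2) * SNR1) / (1 + (1 - ρ'^2) * INR21)) +
        (1/2) * Real.logb 2 ((SNR2 + 2 * ρ' * Real.sqrt (SNR2 * INR21) + INR21) + 1))) -
    (((1/2) * Real.logb 2 (2 + SNR1 / INR21) - 1/2) +
      ((1/2) * Real.logb 2 (SNR1 + INR12 + 1) - 1/2) +
      ((1/2) * Real.logb 2 (SNR2 / INR12 + INR21 + 1) - 1/2)) ≤ 3 := by
  rintro r ⟨hr0, hr1⟩
  have key : ∀ a b : ℝ, 0 ≤ a → 0 ≤ b → 2 * r * Real.sqrt (a * b) ≤ a + b := by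
    intro a b ha hb
    rw [Real.sqrt_mul ha]
    have h1 := Real.sq_sqrt ha
    have h2 := Real.sq_sqrt hb
    have h3 : 0 ≤ Real.sqrt a * Real.sqrt b := by positivity
    nlinarith [sq_nonneg (Real.sqrt a - Real.sqrt b), mul_nonneg (sub_nonneg.2 hr1.le) h3]
  have hI12 : 0 < INR12 := by linarith
  have hI21 : 0 < INR21 := by linarith
  have k1 := key SNR1 INR12 hS1.le hI12.le
  have k2 := key SNR2 INR21 hS2.le hI21.le
  have hd : 0 < 1 - r ^ 2 := by nlinarith
  have hq : 0 < SNR2 / INR12 := by positivity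
  have hA : Real.logb 2 ((SNR1 + 2 * r * Real.sqrt (SNR1 * INR12) + INR12) + 1)
      ≤ 1 + Real.logb 2 (SNR1 + INR12 + 1) := by
    have e : 1 + Real.logb 2 (SNR1 + INR12 + 1) = Real.logb 2 (2 * (SNR1 + INR12 + 1)) := by
      rw [Real.logb_mul (by norm_num) (by positivity), Real.logb_self_eq_one (by norm_num)]
    rw [e]
    exact Real.logb_le_logb_of_le (by norm_num) (by positivity) (by linarith)
  have hB : Real.logb 2 (1 + ((1 - r^2) * SNR1) / (1 + (1 - r^2) * INR21))
      ≤ Real.logb 2 (2 + SNR1 / INR21) := by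
    refine Real.logb_le_logb_of_le (by norm_num) (by positivity) ?_
    have : ((1 - r^2) * SNR1) / (1 + (1 - r^2) * INR21) ≤ SNR1 / INR21 := by
      rw [div_le_div_iff₀ (by positivity) hI21]
      nlinarith
    linarith
  have hC : Real.logb 2 ((SNR2 + 2 * r * Real.sqrt (SNR2 * INR21) + INR21) + 1)
      ≤ 2 + Real.logb 2 (SNR2 / INR12 + INR21 + 1) := by
    have e : 2 + Real.logb 2 (SNR2 / INR12 + INR21 + 1)
        = Real.logb 2 (2 * (2 * (SNR2 / INR12 + INR21 + 1))) := by
      rw [Real.logb_mul (by norm_num) (by positivity), Real.logb_mul (by norm_num) (by positivity),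
        Real.logb_self_eq_one (by norm_num)]
      ring
    rw [e]
    exact Real.logb_le_logb_of_le (by norm_num) (by positivity) (by linarith)
  linarith
end
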